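/- arXiv:2103.02540 — 2 statements merged into one kernel-verified Lean document; each statement's English description precedes it below -/
import Mathlib

section
/- In the setting above, suppose λ ∈ Π⁺ and there is no ω ∈ Ω_K with ⟨ω, λ_K⟩ = 0, where λ_K ∈ ℚ⁴ is the K-component of λ. Write λ_K = (c, 0, a, b) with a, b, c ∈ (1/2)ℤ (the second coordinate of λ_K vanishes automatically because ⟨λ,v⟩ = 0). Then a ≤ 0, b ≤ 0, and (a,b) ≠ (0,0). -/
/-!
STATEMENT 16: In the level-2 setting (Cases A and B), if `λ ∈ Π⁺` and there
is no `ω ∈ Ω_K` with `⟨ω, λ_K⟩ = 0`, then writing `λ_K = (c, 0, a, b)` (the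
second coordinate vanishes automatically since `⟨λ,v⟩ = 0`), one has
`a ≤ 0`, `b ≤ 0` and `(a,b) ≠ (0,0)`.
-/

noncomputable section
namespace Stmt16

/-- The bilinear form of K = U(2) ⊕ U(2) on ℚ⁴ (ℚ-bilinear extension):
Gram matrix has blocks [[0,2],[2,0]] and [[0,2],[2,0]]. -/
def bK (x y : Fin 4 → ℚ) : ℚ :=
  2 * (x 0 * y 1 + x 1 * y 0) + 2 * (x 2 * y 3 + x 3 * y 2)

/-- The bilinear form of E = E8(2) on ℚ⁸ (ℚ-bilinear extension):
Gram matrix is −2 times the E8 Cartan matrix. -/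
def bE (x y : Fin 8 → ℚ) : ℚ :=
  ∑ i : Fin 8, ∑ j : Fin 8, x i * ((-2 * CartanMatrix.E₈ i j : ℤ) : ℚ) * y j

/-- `x` lies in the lattice ℤ⁴ ⊂ ℚ⁴. -/
def isInt4 (x : Fin 4 → ℚ) : Prop := ∀ i, ∃ n : ℤ, x i = n

/-- `x` lies in the lattice ℤ⁸ ⊂ ℚ⁸. -/
def isInt8 (x : Fin 8 → ℚ) : Prop := ∀ i, ∃ n : ℤ, x i = n

/-- `x` lies in the dual lattice (1/2)ℤ⁴ ⊂ ℚ⁴ of K. -/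
def isHalf4 (x : Fin 4 → ℚ) : Prop := ∀ i, ∃ n : ℤ, x i = n / 2

/-- `x` lies in the dual lattice (1/2)ℤ⁸ ⊂ ℚ⁸ of E. -/
def isHalf8 (x : Fin 8 → ℚ) : Prop := ∀ i, ∃ n : ℤ, x i = n / 2

/-- The ambient space ℚ⁴ ⊕ ℚ⁸ of K ⊕ E. -/
abbrev V : Type := (Fin 4 → ℚ) × (Fin 8 → ℚ)

/-- The orthogonal direct sum form of K ⊕ E on ℚ⁴ ⊕ ℚ⁸. -/
def bV (x y : V) : ℚ := bK x.1 y.1 + bE x.2 y.2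

/-- Membership in the lattice Λ' = ℤ·(d₁,d₂) + (ℤ⁴ ⊕ ℤ⁸) ⊂ ℚ⁴ ⊕ ℚ⁸. -/
def memL (d₁ : Fin 4 → ℚ) (d₂ : Fin 8 → ℚ) (x : V) : Prop :=
  ∃ n : ℤ, isInt4 (x.1 - (n : ℚ) • d₁) ∧ isInt8 (x.2 - (n : ℚ) • d₂)

/-- The ℂ-bilinear extension of the form of K to ℂ⁴. -/
def bKC (x y : Fin 4 → ℂ) : ℂ :=
  2 * (x 0 * y 1 + x 1 * y 0) + 2 * (x 2 * y 3 + x 3 * y 2)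

/-- The period domain Ω_K: ω ∈ ℂ⁴ with ⟨ω,ω⟩ = 0 and ⟨ω,ω̄⟩ a positive real. -/
def OmegaK (ω : Fin 4 → ℂ) : Prop :=
  bKC ω ω = 0 ∧ ∃ t : ℝ, 0 < t ∧ bKC ω (fun i => (starRingEnd ℂ) (ω i)) = (t : ℂ)

/-- Coercion ℚ⁴ → ℂ⁴. -/
def qc (x : Fin 4 → ℚ) : Fin 4 → ℂ := fun i => ((x i : ℚ) : ℂ)

/-- `v = ((1,0,0,0), 0)`. -/
def v : V := (![1, 0, 0, 0], 0)

/-- `w = ((0,0,−1,0), 0)`. -/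
def w : V := (![0, 0, -1, 0], 0)

/-!
Let `λ = (λ_K, e)`, so that `⟨e, r⟩ = m` is an integer because `e ∈ ℤ⁸ + ℤr`, `r` lies in the dual
lattice and `⟨r, r⟩ = -1`. Cauchy–Schwarz on the negative definite lattice `E` gives
`m² ≤ -⟨e, e⟩ ≤ 4ab + 2`. The condition `⟨λ, ρ⟩ > 0` reads `a + b < m`, where `a + b` is an integer,
and `4ab ≤ (a + b)²`; if `a + b ≥ 1`, then `m² ≥ (a + b + 1)² > (a + b)² + 2`, which is impossible,
so `a + b ≤ 0`.

On the other hand, `Ω_K` contains the tube domain of all `(-τσ, 1, τ, σ)` with `τ` and `σ` in the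
upper half plane. Orthogonality to `x ∈ ℚ⁴` says that `σ` is the image of `τ` under a homography of
determinant `-⟨x, x⟩ / 4`. If no point of `Ω_K` is orthogonal to `λ_K`, then `λ_K ≠ 0` and
`4ab = ⟨λ_K, λ_K⟩ ≥ 0`, and the signs of `a` and `b` follow.
-/

section E8Form

variable (R : Type*) [CommRing R]

/-- The standard form of the `E₈` root lattice, extended to the free module `R⁸`. The
negative definite form of `E` is `-2` times it. -/
def e8Form : LinearMap.BilinForm R (Fin 8 → R) :=
  (CartanMatrix.E₈.map (Int.cast : ℤ → R)).toBilin'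

lemma e8Form_apply (x y : Fin 8 → R) :
    e8Form R x y = ∑ i, ∑ j, x i * (CartanMatrix.E₈ i j : R) * y j :=
  Matrix.toBilin'_apply _ x y

lemma e8Form_isSymm : (e8Form R).IsSymm :=
  Matrix.isSymm_toBilin'_iff_isSymm.mpr (CartanMatrix.E₈_isSymm.map _)

lemma e8Form_intCast (x y : Fin 8 → ℤ) :
    e8Form R (fun i => (x i : R)) (fun i => (y i : R)) = (e8Form ℤ x y : R) := by
  simp only [e8Form_apply, Int.cast_sum, Int.cast_mul, Int.cast_id]

end E8Form

-- Complete the square along each arm of the Dynkin diagram, from its free end to the branch node.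
lemma e8Form_self_eq_sum_sq {𝕜 : Type*} [Field 𝕜] [CharZero 𝕜] (x : Fin 8 → 𝕜) :
    e8Form 𝕜 x x =
      2 * (x 0 - 1 / 2 * x 2) ^ 2 + 3 / 2 * (x 2 - 2 / 3 * x 3) ^ 2
      + 2 * (x 1 - 1 / 2 * x 3) ^ 2
      + 2 * (x 7 - 1 / 2 * x 6) ^ 2 + 3 / 2 * (x 6 - 2 / 3 * x 5) ^ 2
      + 4 / 3 * (x 5 - 3 / 4 * x 4) ^ 2 + 5 / 4 * (x 4 - 4 / 5 * x 3) ^ 2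
      + 1 / 30 * x 3 ^ 2 := by
  simp only [e8Form_apply, CartanMatrix.E₈, Fin.sum_univ_eight, Matrix.of_apply, Matrix.cons_val,
    Int.cast_neg, Int.cast_ofNat, Int.cast_one, Int.cast_zero]
  ring

section OrderedField

variable {𝕜 : Type*} [Field 𝕜] [LinearOrder 𝕜] [IsStrictOrderedRing 𝕜]

lemma e8Form_self_nonneg (x : Fin 8 → 𝕜) : 0 ≤ e8Form 𝕜 x x := by
  rw [e8Form_self_eq_sum_sq]
  positivity

lemma sq_e8Form_le (x y : Fin 8 → 𝕜) :
    e8Form 𝕜 x y ^ 2 ≤ e8Form 𝕜 x x * e8Form 𝕜 y y :=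
  (e8Form 𝕜).apply_sq_le_of_symm e8Form_self_nonneg
    (LinearMap.BilinForm.isSymm_iff.mp (e8Form_isSymm 𝕜)) x y

end OrderedField

lemma bE_eq_e8Form (x y : Fin 8 → ℚ) : bE x y = -2 * e8Form ℚ x y := by
  simp only [bE, e8Form_apply, Finset.mul_sum]
  refine Finset.sum_congr rfl fun i _ => Finset.sum_congr rfl fun j _ => ?_
  push_cast
  ring

lemma sq_bE_le (x y : Fin 8 → ℚ) : bE x y ^ 2 ≤ bE x x * bE y y := by
  simp only [bE_eq_e8Form]
  linarith [sq_e8Form_le x y]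

lemma exists_int_eq_bE {x y : Fin 8 → ℚ} (hx : isInt8 x) (hy : isHalf8 y) :
    ∃ m : ℤ, bE x y = m := by
  choose a ha using hx
  choose b hb using hy
  have hx_cast : x = fun i => (a i : ℚ) := funext ha
  have hy_cast : (2 : ℚ) • y = fun i => (b i : ℚ) := by
    ext i
    simp [hb i, mul_div_cancel₀]
  refine ⟨-e8Form ℤ a b, ?_⟩
  calc bE x y = -e8Form ℚ x ((2 : ℚ) • y) := by
        rw [bE_eq_e8Form, map_smul, smul_eq_mul, neg_mul]
    _ = ((-e8Form ℤ a b : ℤ) : ℚ) := by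
        rw [hx_cast, hy_cast, e8Form_intCast, Int.cast_neg]

lemma exists_int_eq_bE_of_sub_smul {x r : Fin 8 → ℚ} {n k : ℤ} (hr : isHalf8 r)
    (hrr : bE r r = k) (hx : isInt8 (x - (n : ℚ) • r)) : ∃ m : ℤ, bE x r = m := by
  obtain ⟨m, hm⟩ := exists_int_eq_bE hx hr
  have hsplit : bE x r = bE (x - (n : ℚ) • r) r + n * bE r r := by
    simp only [bE_eq_e8Form, map_sub, map_smul, LinearMap.sub_apply, LinearMap.smul_apply,
      smul_eq_mul]
    ring
  exact ⟨m + n * k, by rw [hsplit, hm, hrr]; push_cast; rfl⟩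

/-- The point of the quadric `⟨ω, ω⟩ = 0` with tube domain coordinates `(τ, σ)`, normalized so that
its pairing with `(1, 0, 0, 0)` is `2`. -/
def tubePoint (τ σ : ℂ) : Fin 4 → ℂ := ![-(τ * σ), 1, τ, σ]

lemma bKC_tubePoint (τ σ τ' σ' : ℂ) :
    bKC (tubePoint τ σ) (tubePoint τ' σ') = -2 * ((τ - τ') * (σ - σ')) := by
  simp only [bKC, tubePoint, Matrix.cons_val]
  ring

lemma conj_tubePoint (τ σ : ℂ) :
    (fun i => (starRingEnd ℂ) (tubePoint τ σ i)) =
      tubePoint ((starRingEnd ℂ) τ) ((starRingEnd ℂ) σ) := by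
  ext i
  fin_cases i <;> simp [tubePoint]

lemma bKC_tubePoint_conj (τ σ : ℂ) :
    bKC (tubePoint τ σ) (fun i => (starRingEnd ℂ) (tubePoint τ σ i)) =
      ((8 * (τ.im * σ.im) : ℝ) : ℂ) := by
  rw [conj_tubePoint, bKC_tubePoint, Complex.sub_conj, Complex.sub_conj]
  push_cast
  linear_combination -8 * (τ.im * σ.im : ℂ) * Complex.I_sq

lemma bKC_tubePoint_qc (τ σ : ℂ) (x : Fin 4 → ℚ) :
    bKC (tubePoint τ σ) (qc x) = 2 * ((x 0 + x 3 * τ) - (x 1 * τ - x 2) * σ) := by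
  simp only [bKC, tubePoint, qc, Matrix.cons_val]
  ring

lemma OmegaK_tubePoint {τ σ : ℂ} (h : 0 < τ.im * σ.im) : OmegaK (tubePoint τ σ) :=
  ⟨by simp [bKC_tubePoint], 8 * (τ.im * σ.im), by positivity, bKC_tubePoint_conj τ σ⟩

lemma exists_OmegaK_orthogonal_zero : ∃ ω, OmegaK ω ∧ bKC ω (qc 0) = 0 :=
  ⟨tubePoint Complex.I Complex.I, OmegaK_tubePoint (by simp), by simp [bKC, qc]⟩

lemma exists_OmegaK_orthogonal_of_neg {x : Fin 4 → ℚ} (hx : bK x x < 0) :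
    ∃ ω, OmegaK ω ∧ bKC ω (qc x) = 0 := by
  have hdet : 0 < -(x 0 * x 1 + x 2 * x 3) := by
    simp only [bK] at hx
    linarith
  set p : ℂ := x 0 + x 3 * Complex.I with hp
  set q : ℂ := x 1 * Complex.I - x 2 with hq
  have hq0 : q ≠ 0 := by
    intro hq0
    have h1 : x 1 = 0 := by simpa [hq] using congrArg Complex.im hq0
    have h2 : x 2 = 0 := by simpa [hq] using congrArg Complex.re hq0
    simp [h1, h2] at hdet
  have him : 0 < (p / q).im := by
    have hnum : (p / q).im = ((-(x 0 * x 1 + x 2 * x 3) : ℚ) : ℝ) / Complex.normSq q := by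
      simp only [hp, hq, Complex.div_im, Complex.add_re, Complex.add_im, Complex.sub_re,
        Complex.sub_im, Complex.mul_re, Complex.mul_im, Complex.ratCast_re, Complex.ratCast_im,
        Complex.I_re, Complex.I_im, Rat.cast_neg, Rat.cast_add, Rat.cast_mul]
      ring
    rw [hnum]
    exact div_pos (by exact_mod_cast hdet) (Complex.normSq_pos.mpr hq0)
  refine ⟨tubePoint Complex.I (p / q), OmegaK_tubePoint (by simpa using him), ?_⟩
  rw [bKC_tubePoint_qc, ← hp, ← hq, mul_div_cancel₀ p hq0, sub_self, mul_zero]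

lemma bK_self_nonneg_and_ne_zero {x : Fin 4 → ℚ}
    (hx : ¬ ∃ ω, OmegaK ω ∧ bKC ω (qc x) = 0) : 0 ≤ bK x x ∧ x ≠ 0 :=
  ⟨not_lt.mp fun h => hx (exists_OmegaK_orthogonal_of_neg h),
    fun h => hx (h ▸ exists_OmegaK_orthogonal_zero)⟩

lemma bV_v (x : V) : bV x v = 2 * x.1 1 := by
  simp [bV, bK, bE, v]

lemma bV_rho (x : V) (r : Fin 8 → ℚ) (u : ℚ) :
    bV x (w + (![u, 0, 1 / 2, -(1 / 2)], 0) + (0, r)) =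
      2 * u * x.1 1 - (x.1 2 + x.1 3) + bE x.2 r := by
  simp only [bV, bK, w, Prod.fst_add, Prod.snd_add, Pi.add_apply, Pi.zero_apply, Matrix.cons_val,
    zero_add]
  ring

lemma bK_self_of_apply_one_eq_zero {x : Fin 4 → ℚ} (hx : x 1 = 0) :
    bK x x = 4 * (x 2 * x 3) := by
  simp only [bK, hx]
  ring

lemma fst_eq_zero_of_bV_eq_zero {x : V} {t : ℚ} (hx : bV x (![0, 1, t, 0], 0) = 0)
    (h1 : x.1 1 = 0) (h2 : x.1 2 = 0) (h3 : x.1 3 = 0) : x.1 = 0 := by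
  have h0 : x.1 0 = 0 := by simpa [bV, bK, bE, h3] using hx
  ext i
  fin_cases i <;> assumption

lemma exists_int_eq_add_of_memL {s : ℚ} {r : Fin 8 → ℚ} {x : V}
    (hx : memL ![s, 0, 1 / 2, 1 / 2] r x) : ∃ q : ℤ, x.1 2 + x.1 3 = q := by
  obtain ⟨n, hK, -⟩ := hx
  obtain ⟨a, ha⟩ := hK 2
  obtain ⟨b, hb⟩ := hK 3
  simp only [Pi.sub_apply, Pi.smul_apply, smul_eq_mul, Matrix.cons_val] at ha hb
  exact ⟨a + b + n, by push_cast; linarith⟩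

lemma nonpos_of_lt_of_sq_le_sq_add_two {q m : ℤ} (hqm : q < m) (hm : m ^ 2 ≤ q ^ 2 + 2) :
    q ≤ 0 := by
  by_contra! hq
  nlinarith

lemma add_nonpos_of_memL {s u : ℚ} {r : Fin 8 → ℚ} {x : V} (hr : isHalf8 r)
    (hrr : bE r r = -1) (hx : memL ![s, 0, 1 / 2, 1 / 2] r x) (h1 : x.1 1 = 0)
    (hpos : 0 < bV x (w + (![u, 0, 1 / 2, -(1 / 2)], 0) + (0, r))) (hnorm : -2 ≤ bV x x) :
    x.1 2 + x.1 3 ≤ 0 := by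
  obtain ⟨q, hq⟩ := exists_int_eq_add_of_memL hx
  obtain ⟨n, -, hE⟩ := hx
  obtain ⟨m, hm⟩ := exists_int_eq_bE_of_sub_smul (k := -1) hr (by simpa using hrr) hE
  have hqm : q < m := by
    rw [bV_rho, h1, hq, hm] at hpos
    exact_mod_cast (by linarith : (q : ℚ) < m)
  have hm_sq : (m : ℚ) ^ 2 ≤ q ^ 2 + 2 := by
    rw [bV, bK_self_of_apply_one_eq_zero h1] at hnorm
    calc (m : ℚ) ^ 2 ≤ bE x.2 x.2 * bE r r := hm ▸ sq_bE_le x.2 r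
      _ = -bE x.2 x.2 := by rw [hrr, mul_neg_one]
      _ ≤ 4 * (x.1 2 * x.1 3) + 2 := by linarith
      _ = 4 * x.1 2 * x.1 3 + 2 := by ring
      _ ≤ (x.1 2 + x.1 3) ^ 2 + 2 := by gcongr; exact four_mul_le_sq_add _ _
      _ = q ^ 2 + 2 := by rw [hq]
  rw [hq]
  exact_mod_cast nonpos_of_lt_of_sq_le_sq_add_two hqm (by exact_mod_cast hm_sq)

theorem statement16_general {r : Fin 8 → ℚ} (hr : isHalf8 r) (hrr : bE r r = -1) (s t u : ℚ)
    {lam : V} (hmem : memL ![s, 0, 1 / 2, 1 / 2] r lam) (hv : bV lam v = 0)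
    (hv' : bV lam (![0, 1, t, 0], 0) = 0)
    (hpos : 0 < bV lam (w + (![u, 0, 1 / 2, -(1 / 2)], 0) + (0, r))) (hnorm : -2 ≤ bV lam lam)
    (hω : ¬ ∃ ω : Fin 4 → ℂ, OmegaK ω ∧ bKC ω (qc lam.1) = 0) :
    lam.1 1 = 0 ∧ lam.1 2 ≤ 0 ∧ lam.1 3 ≤ 0 ∧ ¬(lam.1 2 = 0 ∧ lam.1 3 = 0) := by
  have h1 : lam.1 1 = 0 := by simpa [bV_v] using hv
  obtain ⟨hK, hne⟩ := bK_self_nonneg_and_ne_zero hω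
  rw [bK_self_of_apply_one_eq_zero h1] at hK
  have hadd : lam.1 2 + lam.1 3 ≤ 0 := add_nonpos_of_memL hr hrr hmem h1 hpos hnorm
  have hle : lam.1 2 ≤ 0 ∧ lam.1 3 ≤ 0 := by
    rcases mul_nonneg_iff.mp (show 0 ≤ lam.1 2 * lam.1 3 by linarith) with h | h
    · constructor <;> linarith
    · exact h
  exact ⟨h1, hle.1, hle.2, fun ⟨h2, h3⟩ => hne (fst_eq_zero_of_bV_eq_zero hv' h1 h2 h3)⟩

theorem statement16 (r : Fin 8 → ℚ)
    (hr : isHalf8 r) (hr' : ¬ isInt8 r) (hrr : bE r r = -1)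
    (d₁ : Fin 4 → ℚ) (v' w' : V)
    (hcase :
      (d₁ = ![0, 0, 1/2, 1/2] ∧ v' = ((![0, 1, 0, 0] : Fin 4 → ℚ), 0) ∧
        w' = ((![0, 0, 1/2, -(1/2)] : Fin 4 → ℚ), 0)) ∨
      (d₁ = ![1/2, 0, 1/2, 1/2] ∧ v' = ((![0, 1, 1, 0] : Fin 4 → ℚ), 0) ∧
        w' = ((![1/2, 0, 1/2, -(1/2)] : Fin 4 → ℚ), 0)))
    (lam : V)
    (hmem : memL d₁ r lam) (hv : bV lam v = 0) (hv' : bV lam v' = 0)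
    (hpos : 0 < bV lam (w + w' + ((0 : Fin 4 → ℚ), r)))
    (hnorm : -2 ≤ bV lam lam)
    (hω : ¬ ∃ ω : Fin 4 → ℂ, OmegaK ω ∧ bKC ω (qc lam.1) = 0) :
    lam.1 1 = 0 ∧ lam.1 2 ≤ 0 ∧ lam.1 3 ≤ 0 ∧ ¬(lam.1 2 = 0 ∧ lam.1 3 = 0) := by
  rcases hcase with ⟨rfl, rfl, rfl⟩ | ⟨rfl, rfl, rfl⟩ <;>
    exact statement16_general hr hrr _ _ _ hmem hv hv' hpos hnorm hω

end Stmt16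
end
end

section
/- Let x ∈ (1/2)ℤ⁴ be such that ⟨x,x⟩ is odd, where ⟨·,·⟩ is the form of K extended to ℚ⁴ (the norm of a half-integral vector is automatically an integer). Then there exists y ∈ (1/2)ℤ⁴ with y − x ∈ ℤ⁴ and ⟨y,y⟩ = −1; indeed y may be chosen among the six vectors (1/2,−1/2,0,0), (1/2,−1/2,1/2,0), (1/2,−1/2,0,1/2), (0,0,1/2,−1/2), (1/2,0,1/2,−1/2), (0,1/2,1/2,−1/2). (Every element of the discriminant group of U(2) ⊕ U(2) of odd norm is represented by a vector of norm −1.) -/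
/-!
STATEMENT 18: Every `x ∈ (1/2)ℤ⁴` of odd norm (for the form of
`K = U(2) ⊕ U(2)`) is congruent mod ℤ⁴ to a vector of norm −1, which may be
chosen among the six vectors (1/2,−1/2,0,0), (1/2,−1/2,1/2,0),
(1/2,−1/2,0,1/2), (0,0,1/2,−1/2), (1/2,0,1/2,−1/2), (0,1/2,1/2,−1/2).
-/

noncomputable section
namespace Stmt18

/-- The bilinear form of K = U(2) ⊕ U(2) on ℚ⁴:
`⟨x,y⟩ = 2(x₁y₂ + x₂y₁) + 2(x₃y₄ + x₄y₃)`. -/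
def bK (x y : Fin 4 → ℚ) : ℚ :=
  2 * (x 0 * y 1 + x 1 * y 0) + 2 * (x 2 * y 3 + x 3 * y 2)

/-- `x` lies in the lattice ℤ⁴ ⊂ ℚ⁴. -/
def isInt4 (x : Fin 4 → ℚ) : Prop := ∀ i, ∃ n : ℤ, x i = n

/-- `x` lies in the dual lattice (1/2)ℤ⁴ ⊂ ℚ⁴ of K. -/
def isHalf4 (x : Fin 4 → ℚ) : Prop := ∀ i, ∃ n : ℤ, x i = n / 2

/-!
The norm of `n / 2` is `n₁n₂ + n₃n₄`, and its class modulo `ℤ⁴` is `n` mod 2. Over `𝔽₂` the equation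
`v₁v₂ + v₃v₄ = 1` says that exactly one of the two products is `1`: that pair of coordinates is
`(1, 1)` and the other is one of the three pairs with product `0`. Each of the six solutions
lifts to an integer vector with `n₁n₂ + n₃n₄ = -1` by lifting the pair `(1, 1)` to `(1, -1)`.
-/

/-- The vector `n / 2` of the dual lattice of K; every vector of the dual lattice is encoded by
such an `n`. -/
def halfVec (n : Fin 4 → ℤ) : Fin 4 → ℚ := fun i => n i / 2

/-- The quadratic form `v₁v₂ + v₃v₄` of U ⊕ U over a semiring `R`: over `ℤ` it is the norm on the
dual lattice of K, over `ZMod 2` the induced norm mod 2 on the discriminant group. -/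
def hyperbolicForm {R : Type*} [Semiring R] (v : Fin 4 → R) : R := v 0 * v 1 + v 2 * v 3

/-- The doubles of the six representatives of norm `-1`, one for each solution of
`hyperbolicForm v = 1` over `ZMod 2`. -/
def normNegOneReps : Finset (Fin 4 → ℤ) :=
  {![1, -1, 0, 0], ![1, -1, 1, 0], ![1, -1, 0, 1], ![0, 0, 1, -1], ![1, 0, 1, -1], ![0, 1, 1, -1]}

theorem isHalf4_iff_exists_eq_halfVec {x : Fin 4 → ℚ} : isHalf4 x ↔ ∃ n, x = halfVec n := by
  simp only [isHalf4, halfVec, funext_iff, Classical.skolem]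

theorem bK_halfVec_self (n : Fin 4 → ℤ) : bK (halfVec n) (halfVec n) = (hyperbolicForm n : ℤ) := by
  simp only [bK, halfVec, hyperbolicForm]
  push_cast
  ring

theorem isInt4_halfVec_sub_iff {m n : Fin 4 → ℤ} :
    isInt4 (halfVec m - halfVec n) ↔ ∀ i, (m i : ZMod 2) = n i := by
  refine forall_congr' fun i => ?_
  rw [eq_comm, ZMod.intCast_eq_intCast_iff_dvd_sub]
  refine exists_congr fun k => ?_
  rw [Pi.sub_apply, halfVec, halfVec, ← sub_div, div_eq_iff two_ne_zero, mul_comm]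
  norm_cast

theorem map_hyperbolicForm {R S : Type*} [Semiring R] [Semiring S] (f : R →+* S) (v : Fin 4 → R) :
    f (hyperbolicForm v) = hyperbolicForm fun i => f (v i) := by
  simp only [hyperbolicForm, map_add, map_mul]

theorem hyperbolicForm_of_mem_normNegOneReps {m : Fin 4 → ℤ} (hm : m ∈ normNegOneReps) :
    hyperbolicForm m = -1 := by
  revert m
  decide

theorem exists_mem_normNegOneReps_of_hyperbolicForm_eq_one {v : Fin 4 → ZMod 2}
    (hv : hyperbolicForm v = 1) : ∃ m ∈ normNegOneReps, ∀ i, (m i : ZMod 2) = v i := by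
  revert v
  decide

theorem halfVec_of_mem_normNegOneReps {m : Fin 4 → ℤ} (hm : m ∈ normNegOneReps) :
    halfVec m = ![1/2, -(1/2), 0, 0] ∨ halfVec m = ![1/2, -(1/2), 1/2, 0] ∨
      halfVec m = ![1/2, -(1/2), 0, 1/2] ∨ halfVec m = ![0, 0, 1/2, -(1/2)] ∨
      halfVec m = ![1/2, 0, 1/2, -(1/2)] ∨ halfVec m = ![0, 1/2, 1/2, -(1/2)] := by
  simp only [normNegOneReps, Finset.mem_insert, Finset.mem_singleton] at hm
  refine hm.imp ?_ (.imp ?_ (.imp ?_ (.imp ?_ (.imp ?_ ?_)))) <;>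
  · rintro rfl
    ext i
    fin_cases i <;> norm_num [halfVec]

theorem statement18 (x : Fin 4 → ℚ) (hx : isHalf4 x)
    (hodd : ∃ m : ℤ, bK x x = 2 * m + 1) :
    ∃ y : Fin 4 → ℚ,
      (y = ![1/2, -(1/2), 0, 0] ∨ y = ![1/2, -(1/2), 1/2, 0] ∨
        y = ![1/2, -(1/2), 0, 1/2] ∨ y = ![0, 0, 1/2, -(1/2)] ∨
        y = ![1/2, 0, 1/2, -(1/2)] ∨ y = ![0, 1/2, 1/2, -(1/2)]) ∧
      isInt4 (y - x) ∧ bK y y = -1 := by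
  obtain ⟨n, rfl⟩ := isHalf4_iff_exists_eq_halfVec.mp hx
  obtain ⟨k, hk⟩ := hodd
  have norm_odd : hyperbolicForm n = 2 * k + 1 := by
    rw [bK_halfVec_self] at hk
    exact_mod_cast hk
  have norm_mod_two : hyperbolicForm (fun i => (n i : ZMod 2)) = 1 := by
    have cast_norm := map_hyperbolicForm (Int.castRingHom (ZMod 2)) n
    simp only [eq_intCast] at cast_norm
    rw [← cast_norm, ZMod.intCast_eq_one_iff_odd]
    exact ⟨k, norm_odd⟩
  obtain ⟨m, hm, hmn⟩ := exists_mem_normNegOneReps_of_hyperbolicForm_eq_one norm_mod_two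
  refine ⟨halfVec m, halfVec_of_mem_normNegOneReps hm, isInt4_halfVec_sub_iff.mpr hmn, ?_⟩
  rw [bK_halfVec_self, hyperbolicForm_of_mem_normNegOneReps hm, Int.cast_neg, Int.cast_one]

end Stmt18
end
end
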